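/- The 21×21 real matrix A has rank 7. -/

import Mathlib

/-!
`A` is a circulant matrix, and its entries only depend on the orbit of `i - j` under the subgroup
`{±1, ±4, ±5}` of the units modulo 21.  It has just three distinct eigenvalues: `λ₀` on the all-ones
vector, `λ₁` on a 6-dimensional eigenspace and `0`.  Writing `J` for the all-ones matrix, this is
expressed by `A * J = λ₀ J` and `A * A = λ₁ A + μ J` (`A_mul_allOnes`, `A_mul_A`).  Hence the projection
`P = c A + f J` (with `c = 1 / λ₁`) onto the range of `A` satisfies `P * A = A` and `P = A * M`
for some `M`; so `A` and `P` have the same rank, and the rank of the idempotent `P` is its trace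
`21 (c + f) = 7`.
-/

open Matrix

noncomputable section

def u : ℝ := (27 + 7 * Real.sqrt 21) / 50
def v : ℝ := (21 + 11 * Real.sqrt 21) / 50
def w : ℝ := (49 + 9 * Real.sqrt 21) / 50

/-- The 21×21 Gram matrix `A` of the polytope `P₂₁ ⊂ H⁶`. -/
def A : Matrix (Fin 21) (Fin 21) ℝ := fun i j =>
  let d : ZMod 21 := (i.val : ZMod 21) - (j.val : ZMod 21)
  if d = 0 then 1
  else if d ∈ ({1, -1, 4, -4, 5, -5} : Finset (ZMod 21)) then 0
  else if d ∈ ({3, -3, 6, -6, 9, -9} : Finset (ZMod 21)) then -u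
  else if d ∈ ({2, -2, 8, -8, 10, -10} : Finset (ZMod 21)) then -v
  else -w  -- this case occurs exactly when `d = ±7 (mod 21)`

end

/-- The first column of the circulant matrix `A`. -/
noncomputable def aCol : Fin 21 → ℝ :=
  ![1, 0, -v, -u, 0, 0, -u, -w, -v, -u, -v, -v, -u, -v, -w, -u, 0, 0, -u, -v, 0]

theorem A_eq_circulant : A = circulant aCol := by
  -- `ZMod 21` unfolds to `Fin 21`, so `aCol` can be applied to residues.
  have key : ∀ d : ZMod 21,
      (if d = 0 then (1 : ℝ)
        else if d ∈ ({1, -1, 4, -4, 5, -5} : Finset (ZMod 21)) then 0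
        else if d ∈ ({3, -3, 6, -6, 9, -9} : Finset (ZMod 21)) then -u
        else if d ∈ ({2, -2, 8, -8, 10, -10} : Finset (ZMod 21)) then -v
        else -w) = aCol d := by
    intro d
    fin_cases d <;> rfl
  have hcast : ∀ i j : Fin 21, (i.val : ZMod 21) - (j.val : ZMod 21) = (show ZMod 21 from i - j) := by
    decide
  ext i j
  rw [circulant_apply]
  exact (key _).trans (congrArg aCol (hcast i j))

/-- The all-ones matrix. -/
def allOnes : Matrix (Fin 21) (Fin 21) ℝ := circulant fun _ => 1

theorem A_mul_A :
    A * A = ((231 + 21 * √21) / 50 : ℝ) • A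
    + ((13797 + 2877 * √21) / 1250 : ℝ) • allOnes := by
  have hs : √21 * √21 = (21 : ℝ) := Real.mul_self_sqrt (by norm_num)
  rw [A_eq_circulant, allOnes, Fin.circulant_mul, ← circulant_smul, ← circulant_smul, ← circulant_add]
  congr 1
  ext i
  fin_cases i <;>
    · simp [mulVec, dotProduct, Fin.sum_univ_succ, circulant_apply, aCol, u, v, w]
      linarith

theorem A_mul_allOnes : A * allOnes = (-(168 + 63 * √21) / 25 : ℝ) • allOnes := by
  rw [A_eq_circulant, allOnes, Fin.circulant_mul, ← circulant_smul]
  congr 1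
  ext i
  have h := Equiv.sum_comp (Equiv.subLeft i) aCol
  simp only [Equiv.subLeft_apply] at h
  simp only [mulVec, dotProduct, circulant_apply, mul_one, Pi.smul_apply, smul_eq_mul, h]
  simp [Fin.sum_univ_succ, aCol, u, v, w]
  linarith

theorem allOnes_mul_A : allOnes * A = (-(168 + 63 * √21) / 25 : ℝ) • allOnes := by
  rw [← A_mul_allOnes, A_eq_circulant, allOnes, Fin.circulant_mul_comm]

/-- The rank of an idempotent real matrix is its trace. -/
theorem rank_eq_trace_of_idempotent {n : ℕ} (P : Matrix (Fin n) (Fin n) ℝ) (h : P * P = P) :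
    (P.rank : ℝ) = P.trace := by
  have hp : IsIdempotentElem (toLin' P) := by
    rw [IsIdempotentElem, Module.End.mul_eq_comp, ← toLin'_mul, h]
  have := (LinearMap.IsIdempotentElem.isProj_range _ hp).trace
  rw [trace_toLin'_eq] at this
  rw [this]
  rfl

/-- The Gram matrix `A` has rank 7. -/
theorem rank_A_eq_seven : A.rank = 7 := by
  have hs : √21 * √21 = (21 : ℝ) := Real.mul_self_sqrt (by norm_num)
  -- `c = 1 / λ₁`, `f = 1/3 - c` (forced by the trace), and `f / λ₀` is the coefficient in `M`.
  set P : Matrix (Fin 21) (Fin 21) ℝ := ((11 - √21) / 42) • A + ((3 + √21) / 42) • allOnes with hP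
  set M : Matrix (Fin 21) (Fin 21) ℝ := ((11 - √21) / 42) • 1 + (-(39 + √21) / 4410) • allOnes with hM
  have hPM : P = A * M := by
    rw [hP, hM, mul_add, Matrix.mul_smul, Matrix.mul_smul, mul_one, A_mul_allOnes, smul_smul]
    congr 2
    linear_combination (-63 / 110250) * hs
  have hPA : P * A = A := by
    rw [hP, add_mul, smul_mul, smul_mul, A_mul_A, allOnes_mul_A, smul_add, smul_smul, smul_smul,
      smul_smul, add_assoc, ← add_smul]
    have h1 : (11 - √21) / 42 * ((231 + 21 * √21) / 50) = 1 := by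
      linear_combination (-1 / 100) * hs
    have h2 : (11 - √21) / 42 * ((13797 + 2877 * √21) / 1250)
        + (3 + √21) / 42 * (-(168 + 63 * √21) / 25) = 0 := by
      linear_combination (-2877 / 52500 - 63 / 1050) * hs
    rw [h1, h2, one_smul, zero_smul, add_zero]
  have hPP : P * P = P := by
    nth_rewrite 2 [hPM]
    rw [← mul_assoc, hPA, ← hPM]
  have htr : P.trace = 7 := by
    have hA : A.trace = 21 := by simp [trace, A]
    have hJ : allOnes.trace = 21 := by simp [trace, allOnes, circulant_apply]
    rw [hP, trace_add, trace_smul, trace_smul, hA, hJ, smul_eq_mul, smul_eq_mul]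
    ring
  have hle : A.rank ≤ P.rank := by
    conv_lhs => rw [← hPA]
    exact rank_mul_le_left P A
  have hge : P.rank ≤ A.rank := by
    rw [hPM]
    exact rank_mul_le_left A M
  have h7 : P.rank = 7 := by
    have := rank_eq_trace_of_idempotent P hPP
    rw [htr] at this
    exact_mod_cast this
  lia
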